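/- For every tripartite density matrix ρ_ABB' on ℂ^{d_A}⊗ℂ^{d_B}⊗ℂ^{d_B'}, the identity D_{B|A}(ρ_AB) + D_{B'|A}(ρ_AB') − D_{BB'|A}(ρ_ABB') = I_{B:B'|A}(ρ_ÃBB') − I_{B:B'|A}(ρ_ABB') holds, where ρ_AB = tr_{B'}(ρ_ABB'), ρ_AB' = tr_B(ρ_ABB'), and ρ_ÃBB' = (Δ_A⊗id⊗id)(ρ_ABB'). -/

import Mathlib

open Matrix Kronecker BigOperators
open scoped ComplexOrder

noncomputable section

/-- The completely dephasing map `Δ`: keeps only the diagonal entries. -/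
def deph {n : Type*} [DecidableEq n] (M : Matrix n n ℂ) : Matrix n n ℂ :=
  Matrix.of fun i j => if i = j then M i j else 0

/-- A density matrix: positive semidefinite with unit trace. -/
def IsDensityMatrix {n : Type*} [Fintype n] (ρ : Matrix n n ℂ) : Prop :=
  ρ.PosSemidef ∧ ρ.trace = 1

/-- Von Neumann entropy (base 2): `S(ρ) = -∑ λ_k log₂ λ_k`. -/
def vnEntropy {n : Type*} [Fintype n] [DecidableEq n] (ρ : Matrix n n ℂ) : ℝ :=
  if h : ρ.IsHermitian then -∑ k, h.eigenvalues k * Real.logb 2 (h.eigenvalues k) else 0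

/-- Partial trace over the second factor: `ρ_A = tr_B ρ_AB`. -/
def ptrB {A B : Type*} [Fintype B] (ρ : Matrix (A × B) (A × B) ℂ) : Matrix A A ℂ :=
  Matrix.of fun a a' => ∑ b, ρ (a, b) (a', b)

/-- Partial trace over the first factor: `ρ_B = tr_A ρ_AB`. -/
def ptrA {A B : Type*} [Fintype A] (ρ : Matrix (A × B) (A × B) ℂ) : Matrix B B ℂ :=
  Matrix.of fun b b' => ∑ a, ρ (a, b) (a, b')

/-- `p_i = tr((|i⟩⟨i|⊗1) ρ_AB)`. -/
def probA {A B : Type*} [Fintype B] (ρ : Matrix (A × B) (A × B) ℂ) (i : A) : ℝ :=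
  (∑ b, ρ (i, b) (i, b)).re

/-- `ρ_{B|i} = tr_A((|i⟩⟨i|⊗1) ρ_AB) / p_i`. -/
def condB {A B : Type*} [Fintype B] (ρ : Matrix (A × B) (A × B) ℂ) (i : A) :
    Matrix B B ℂ :=
  ((probA ρ i : ℝ) : ℂ)⁻¹ • Matrix.of fun b b' => ρ (i, b) (i, b')

/-- Quantum discord based on incoherent measurement:
`D_{B|A}(ρ) = ∑ᵢ pᵢ S(ρ_{B|i}) + S(ρ_A) − S(ρ_AB)`. -/
def QDI {A B : Type*} [Fintype A] [Fintype B] [DecidableEq A] [DecidableEq B]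
    (ρ : Matrix (A × B) (A × B) ℂ) : ℝ :=
  (∑ i, probA ρ i * vnEntropy (condB ρ i)) + vnEntropy (ptrB ρ) - vnEntropy ρ

/-- Dephasing on the first subsystem: `Δ_A ⊗ id`. -/
def dephA {A B : Type*} [DecidableEq A] (ρ : Matrix (A × B) (A × B) ℂ) :
    Matrix (A × B) (A × B) ℂ :=
  Matrix.of fun p q => if p.1 = q.1 then ρ p q else 0

/-- Dephasing on the second subsystem: `id ⊗ Δ_B`. -/
def dephB {A B : Type*} [DecidableEq B] (ρ : Matrix (A × B) (A × B) ℂ) :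
    Matrix (A × B) (A × B) ℂ :=
  Matrix.of fun p q => if p.2 = q.2 then ρ p q else 0

/-- Trace out the last system of a tripartite state on `A × (B × B')`, leaving `A × B`. -/
def ptrB2 {A B B' : Type*} [Fintype B'] (ρ : Matrix (A × B × B') (A × B × B') ℂ) :
    Matrix (A × B) (A × B) ℂ :=
  Matrix.of fun p q => ∑ c, ρ (p.1, p.2, c) (q.1, q.2, c)

/-- Trace out the middle system of a tripartite state on `A × (B × B')`, leaving `A × B'`. -/
def ptrB1 {A B B' : Type*} [Fintype B] (ρ : Matrix (A × B × B') (A × B × B') ℂ) :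
    Matrix (A × B') (A × B') ℂ :=
  Matrix.of fun p q => ∑ b, ρ (p.1, b, p.2) (q.1, b, q.2)

/-- Conditional mutual information
`I_{B:B'|A}(ρ) = S(ρ_AB) + S(ρ_AB') − S(ρ_ABB') − S(ρ_A)`. -/
def condMutInfo {A B B' : Type*} [Fintype A] [Fintype B] [Fintype B']
    [DecidableEq A] [DecidableEq B] [DecidableEq B']
    (ρ : Matrix (A × B × B') (A × B × B') ℂ) : ℝ :=
  vnEntropy (ptrB2 ρ) + vnEntropy (ptrB1 ρ) - vnEntropy ρ - vnEntropy (ptrB ρ)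

lemma roots_prod_lin {κ : Type*} [Fintype κ] (y : κ → ℂ) :
    (∏ i, (Polynomial.X - Polynomial.C (y i))).roots = Multiset.map y Finset.univ.val := by
  rw [Polynomial.roots_prod]
  · simp
  · simp [Finset.prod_ne_zero_iff, Polynomial.X_sub_C_ne_zero]

lemma vnEntropy_of_charpoly {n ι : Type*} [Fintype n] [DecidableEq n] [Fintype ι]
    (M : Matrix n n ℂ) (hM : M.IsHermitian) (x : ι → ℝ)
    (hx : M.charpoly = ∏ i, (Polynomial.X - Polynomial.C (x i : ℂ))) :
    vnEntropy M = -∑ i, x i * Real.logb 2 (x i) := by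
  have h1 := hM.charpoly_eq
  rw [hx] at h1
  have h2 := congrArg Polynomial.roots h1
  rw [roots_prod_lin, roots_prod_lin] at h2
  have h3 := congrArg (fun s : Multiset ℂ => (s.map (fun z => z.re * Real.logb 2 z.re)).sum) h2
  simp only [Multiset.map_map] at h3
  unfold vnEntropy
  rw [dif_pos hM]
  congr 1
  exact h3.symm

lemma vnEntropy_diagonal {n : Type*} [Fintype n] [DecidableEq n] (x : n → ℝ) :
    vnEntropy (Matrix.diagonal fun i => (x i : ℂ)) = -∑ i, x i * Real.logb 2 (x i) := by
  apply vnEntropy_of_charpoly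
  · rw [Matrix.isHermitian_diagonal_iff]
    intro i
    simp [isSelfAdjoint_iff]
  · simp [Matrix.charpoly_diagonal]

lemma charpoly_smul_herm {n : Type*} [Fintype n] [DecidableEq n] (M : Matrix n n ℂ)
    (hM : M.IsHermitian) (c : ℝ) :
    ((c : ℂ) • M).charpoly =
      ∏ i, (Polynomial.X - Polynomial.C ((c * hM.eigenvalues i : ℝ) : ℂ)) := by
  conv_lhs => rw [hM.spectral_theorem, ← map_smul, Unitary.conjStarAlgAut_apply,
    Matrix.charpoly_mul_comm, ← mul_assoc]
  simp [← Matrix.diagonal_smul, Matrix.charpoly_diagonal]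

lemma scale_entropy {n : Type*} [Fintype n] [DecidableEq n] (M : Matrix n n ℂ)
    (hM : M.PosSemidef) (p : ℝ) (hp : p = M.trace.re) :
    p * vnEntropy (((p : ℝ) : ℂ)⁻¹ • M) = vnEntropy M + p * Real.logb 2 p := by
  have hH := hM.1
  have hsum : p = ∑ i, hH.eigenvalues i := by
    rw [hp, hH.trace_eq_sum_eigenvalues]; simp
  have hS : vnEntropy M = -∑ i, hH.eigenvalues i * Real.logb 2 (hH.eigenvalues i) := by
    unfold vnEntropy; rw [dif_pos hH]
  by_cases h0 : p = 0
  · have hz : ∀ i, hH.eigenvalues i = 0 := by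
      intro i
      have := (Finset.sum_eq_zero_iff_of_nonneg (s := Finset.univ)
        (fun i _ => hM.eigenvalues_nonneg i)).1 (hsum.symm.trans h0)
      exact this i (Finset.mem_univ _)
    simp [hS, hz, h0]
  · have hc := charpoly_smul_herm M hH p⁻¹
    have hherm : (((p⁻¹ : ℝ) : ℂ) • M).IsHermitian := by
      unfold Matrix.IsHermitian
      rw [Matrix.conjTranspose_smul, hH.eq]
      simp
    have := vnEntropy_of_charpoly _ hherm _ hc
    rw [← Complex.ofReal_inv, this, hS]
    have key : ∀ i, p * (p⁻¹ * hH.eigenvalues i * Real.logb 2 (p⁻¹ * hH.eigenvalues i)) =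
        hH.eigenvalues i * Real.logb 2 (hH.eigenvalues i) - hH.eigenvalues i * Real.logb 2 p := by
      intro i
      by_cases hl : hH.eigenvalues i = 0
      · simp [hl]
      · rw [Real.logb_mul (inv_ne_zero h0) hl, Real.logb_inv]
        field_simp
        ring
    rw [mul_neg, Finset.mul_sum, Finset.sum_congr rfl (fun i _ => key i),
      Finset.sum_sub_distrib, ← Finset.sum_mul, ← hsum]
    ring

/-- The diagonal block of `σ` at `i`. -/
def blk {A B : Type*} (σ : Matrix (A × B) (A × B) ℂ) (i : A) : Matrix B B ℂ :=
  σ.submatrix (fun b => (i, b)) (fun b => (i, b))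

lemma charpoly_dephA {A B : Type*} [Fintype A] [Fintype B] [DecidableEq A] [DecidableEq B]
    (σ : Matrix (A × B) (A × B) ℂ) : (dephA σ).charpoly = ∏ i, (blk σ i).charpoly := by
  have h : dephA σ = Matrix.reindex (Equiv.prodComm B A) (Equiv.prodComm B A)
      (Matrix.blockDiagonal (blk σ)) := by
    ext ⟨a, b⟩ ⟨a', b'⟩
    simp only [dephA, blk, Matrix.of_apply, Matrix.reindex_apply, Matrix.submatrix_apply,
      Matrix.blockDiagonal_apply, Equiv.prodComm_symm, Equiv.prodComm_apply, Prod.swap]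
    split_ifs with h
    · subst h; rfl
    · rfl
  rw [h, Matrix.charpoly_reindex]
  have h2 : (Matrix.blockDiagonal (blk σ)).charmatrix =
      Matrix.blockDiagonal (fun i => (blk σ i).charmatrix) := by
    ext1 ⟨b, a⟩ ⟨b', a'⟩
    simp only [Matrix.charmatrix_apply, Matrix.blockDiagonal_apply, Matrix.diagonal_apply,
      Prod.mk.injEq]
    by_cases h : a = a' <;> simp [h]
  unfold Matrix.charpoly
  rw [h2, Matrix.det_blockDiagonal]

lemma vnEntropy_dephA {A B : Type*} [Fintype A] [Fintype B] [DecidableEq A] [DecidableEq B]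
    (σ : Matrix (A × B) (A × B) ℂ) (hσ : σ.PosSemidef) :
    vnEntropy (dephA σ) = ∑ i, vnEntropy (blk σ i) := by
  have hb : ∀ i, (blk σ i).IsHermitian := fun i => hσ.1.submatrix _
  have hH : (dephA σ).IsHermitian := by
    ext p q
    have := hσ.1.apply p q
    by_cases h : p.1 = q.1
    · simpa [dephA, h] using this
    · simp [dephA, h, Ne.symm h]
  have hc : (dephA σ).charpoly = ∏ ik : A × B,
      (Polynomial.X - Polynomial.C (((hb ik.1).eigenvalues ik.2 : ℝ) : ℂ)) := by
    rw [charpoly_dephA, Fintype.prod_prod_type]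
    exact Finset.prod_congr rfl fun i _ => (hb i).charpoly_eq
  rw [vnEntropy_of_charpoly _ hH _ hc, Fintype.sum_prod_type, ← Finset.sum_neg_distrib]
  refine Finset.sum_congr rfl fun i _ => ?_
  unfold vnEntropy
  rw [dif_pos (hb i)]

lemma sum_cond {A B : Type*} [Fintype A] [Fintype B] [DecidableEq A] [DecidableEq B]
    (σ : Matrix (A × B) (A × B) ℂ) (hσ : σ.PosSemidef) :
    ∑ i, probA σ i * vnEntropy (condB σ i) =
      vnEntropy (dephA σ) + ∑ i, probA σ i * Real.logb 2 (probA σ i) := by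
  rw [vnEntropy_dephA σ hσ, ← Finset.sum_add_distrib]
  exact Finset.sum_congr rfl fun i _ => scale_entropy (blk σ i) (hσ.submatrix _) _ rfl

lemma vnEntropy_ptrB_dephA {A B : Type*} [Fintype A] [Fintype B] [DecidableEq A] [DecidableEq B]
    (σ : Matrix (A × B) (A × B) ℂ) (hσ : σ.PosSemidef) :
    vnEntropy (ptrB (dephA σ)) = -∑ i, probA σ i * Real.logb 2 (probA σ i) := by
  rw [← vnEntropy_diagonal]
  congr 1
  ext a a'
  by_cases h : a = a'
  · subst h
    simp only [ptrB, dephA, Matrix.of_apply, if_true, Matrix.diagonal_apply_eq, probA,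
      Complex.re_sum, Complex.ofReal_sum]
    exact Finset.sum_congr rfl fun b _ => (hσ.1.coe_re_apply_self (a, b)).symm
  · simp [ptrB, dephA, h]

lemma ptrB2_psd {A B C : Type*} [Fintype C] (ρ : Matrix (A × B × C) (A × B × C) ℂ)
    (h : ρ.PosSemidef) : (ptrB2 ρ).PosSemidef := by
  have : ptrB2 ρ = ∑ c, ρ.submatrix (fun p : A × B => (p.1, p.2, c)) (fun p => (p.1, p.2, c)) := by
    ext p q
    simp [ptrB2, Matrix.sum_apply]
  rw [this]
  exact Matrix.posSemidef_sum _ fun c _ => h.submatrix _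

lemma ptrB1_psd {A B C : Type*} [Fintype B] (ρ : Matrix (A × B × C) (A × B × C) ℂ)
    (h : ρ.PosSemidef) : (ptrB1 ρ).PosSemidef := by
  have : ptrB1 ρ = ∑ b, ρ.submatrix (fun p : A × C => (p.1, b, p.2)) (fun p => (p.1, b, p.2)) := by
    ext p q
    simp [ptrB1, Matrix.sum_apply]
  rw [this]
  exact Matrix.posSemidef_sum _ fun c _ => h.submatrix _

/-- for every tripartite state,
`D_{B|A}(ρ_AB) + D_{B'|A}(ρ_AB') − D_{BB'|A}(ρ_ABB') = I_{B:B'|A}(ρ_ÃBB') − I_{B:B'|A}(ρ_ABB')`. -/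
theorem stmt15 {dA dB dB' : ℕ}
    (ρ : Matrix (Fin dA × Fin dB × Fin dB') (Fin dA × Fin dB × Fin dB') ℂ)
    (hρ : IsDensityMatrix ρ) :
    QDI (ptrB2 ρ) + QDI (ptrB1 ρ) - QDI ρ =
      condMutInfo (dephA ρ) - condMutInfo ρ := by
  have hp := hρ.1
  have e2 : ptrB2 (dephA ρ) = dephA (ptrB2 ρ) := by
    ext p q
    by_cases h : p.1 = q.1 <;> simp [ptrB2, dephA, h]
  have e1 : ptrB1 (dephA ρ) = dephA (ptrB1 ρ) := by
    ext p q
    by_cases h : p.1 = q.1 <;> simp [ptrB1, dephA, h]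
  have t2 : ptrB (ptrB2 ρ) = ptrB ρ := by
    ext a a'
    simp [ptrB, ptrB2, Fintype.sum_prod_type]
  have t1 : ptrB (ptrB1 ρ) = ptrB ρ := by
    ext a a'
    simp only [ptrB, ptrB1, Matrix.of_apply, Fintype.sum_prod_type]
    exact Finset.sum_comm
  have q2 : probA (ptrB2 ρ) = probA ρ := by
    funext a
    exact congrArg Complex.re (congrFun (congrFun t2 a) a)
  have q1 : probA (ptrB1 ρ) = probA ρ := by
    funext a
    exact congrArg Complex.re (congrFun (congrFun t1 a) a)
  have s2 := sum_cond _ (ptrB2_psd ρ hp)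
  have s1 := sum_cond _ (ptrB1_psd ρ hp)
  have s0 := sum_cond _ hp
  have d := vnEntropy_ptrB_dephA ρ hp
  unfold QDI condMutInfo
  rw [s2, s1, s0, q2, q1, t2, t1, e2, e1, d]
  ring
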